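/- Recurrence between bilinear sums (equation (diff)). Define S_m(φ, ϕ) := ∑_{i=0}^m c_i Ψ_i(φ)Ψ_i(ϕ) cos(k_i(φ − ϕ)) and S_{m+1}(φ, ϕ) := ∑_{i=0}^{m+1} c̃_i Ψ̃_i(φ)Ψ̃_i(ϕ) cos(k_i(φ − ϕ)). Then at all points (φ, ϕ) where W(φ), W(ϕ), W̃(φ), W̃(ϕ) are all nonzero, one has −Ψ̃_{m+1}(φ)·∂/∂φ(S_{m+1}(φ,ϕ)/Ψ̃_{m+1}(φ)) − Ψ̃_{m+1}(ϕ)·∂/∂ϕ(S_{m+1}(φ,ϕ)/Ψ̃_{m+1}(ϕ)) = (∂/∂φ(Ψ̃_{m+1}(φ)·S_m(φ,ϕ)))/Ψ̃_{m+1}(φ) + (∂/∂ϕ(Ψ̃_{m+1}(ϕ)·S_m(φ,ϕ)))/Ψ̃_{m+1}(ϕ). -/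

import Mathlib

/-- The Wronskian of a family of `n` real functions: the determinant of the
`n × n` matrix whose `(i, j)`-entry is the `j`-th derivative of the `i`-th function. -/
noncomputable def wronsk {n : ℕ} (f : Fin n → ℝ → ℝ) (t : ℝ) : ℝ :=
  (Matrix.of fun i j : Fin n => iteratedDeriv (j : ℕ) (f i) t).det

/-- The functions `χ_i(φ) = cos(k_i φ + θ_i)`, `0 ≤ i ≤ m+1`. -/
noncomputable def chiF (m : ℕ) (k : Fin (m + 2) → ℤ) (θ : Fin (m + 2) → ℝ)
    (i : Fin (m + 2)) : ℝ → ℝ :=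
  fun φ => Real.cos ((k i : ℝ) * φ + θ i)

/-- `W(φ) = Wr[χ_0, …, χ_m](φ)` (the first `m+1` functions). -/
noncomputable def Wfn (m : ℕ) (k : Fin (m + 2) → ℤ) (θ : Fin (m + 2) → ℝ) : ℝ → ℝ :=
  wronsk fun j : Fin (m + 1) => chiF m k θ j.castSucc

/-- `W̃(φ) = Wr[χ_0, …, χ_{m+1}](φ)` (all `m+2` functions). -/
noncomputable def Wtfn (m : ℕ) (k : Fin (m + 2) → ℤ) (θ : Fin (m + 2) → ℝ) : ℝ → ℝ :=
  wronsk (chiF m k θ)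

/-- `Ψ_i(φ) = Wr[χ_0, …, χ_{i−1}, χ_{i+1}, …, χ_m](φ)/W(φ)` for `0 ≤ i ≤ m`. -/
noncomputable def PsiF (m : ℕ) (k : Fin (m + 2) → ℤ) (θ : Fin (m + 2) → ℝ)
    (i : Fin (m + 1)) : ℝ → ℝ :=
  fun φ => wronsk (fun j : Fin m => chiF m k θ (i.succAbove j).castSucc) φ / Wfn m k θ φ

/-- `Ψ̃_i(φ) = Wr[χ_0, …, χ_{i−1}, χ_{i+1}, …, χ_{m+1}](φ)/W̃(φ)` for `0 ≤ i ≤ m+1`. -/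
noncomputable def PsitF (m : ℕ) (k : Fin (m + 2) → ℤ) (θ : Fin (m + 2) → ℝ)
    (i : Fin (m + 2)) : ℝ → ℝ :=
  fun φ => wronsk (fun j : Fin (m + 1) => chiF m k θ (i.succAbove j)) φ / Wtfn m k θ φ

/-- `c_i = ∏_{0 ≤ j ≤ m, j ≠ i} (k_i² − k_j²)` for `0 ≤ i ≤ m`. -/
noncomputable def cF (m : ℕ) (k : Fin (m + 2) → ℤ) (i : Fin (m + 1)) : ℝ :=
  ∏ j ∈ Finset.univ.erase i, ((k i.castSucc : ℝ) ^ 2 - (k j.castSucc : ℝ) ^ 2)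

/-- `c̃_i = ∏_{0 ≤ j ≤ m+1, j ≠ i} (k_i² − k_j²)` for `0 ≤ i ≤ m+1`. -/
noncomputable def ctF (m : ℕ) (k : Fin (m + 2) → ℤ) (i : Fin (m + 2)) : ℝ :=
  ∏ j ∈ Finset.univ.erase i, ((k i : ℝ) ^ 2 - (k j : ℝ) ^ 2)

/-- `S_m(φ, ϕ) = ∑_{i=0}^m c_i Ψ_i(φ) Ψ_i(ϕ) cos(k_i(φ − ϕ))`. -/
noncomputable def Sm (m : ℕ) (k : Fin (m + 2) → ℤ) (θ : Fin (m + 2) → ℝ)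
    (φ ϕ : ℝ) : ℝ :=
  ∑ i : Fin (m + 1), cF m k i * PsiF m k θ i φ * PsiF m k θ i ϕ *
    Real.cos ((k i.castSucc : ℝ) * (φ - ϕ))

/-- `S_{m+1}(φ, ϕ) = ∑_{i=0}^{m+1} c̃_i Ψ̃_i(φ) Ψ̃_i(ϕ) cos(k_i(φ − ϕ))`. -/
noncomputable def Smt (m : ℕ) (k : Fin (m + 2) → ℤ) (θ : Fin (m + 2) → ℝ)
    (φ ϕ : ℝ) : ℝ :=
  ∑ i : Fin (m + 2), ctF m k i * PsitF m k θ i φ * PsitF m k θ i ϕ *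
    Real.cos ((k i : ℝ) * (φ - ϕ))

/-
Put `q_i = (-1) ^ (i + m + 1) Ψ̃_i`, `p_i = (-1) ^ (i + m) Ψ_i`. By Cramer's rule these are the
last rows of the inverse Wronskian matrices, so `∑ q_i χ_i^{(j)} = δ_{j, m+1}` for `j ≤ m + 1`, and
similarly for `p`. Differentiating these relations and using that they determine `q` and `p` gives
the Darboux intertwinings `A^* q_i = p_i` and `A p_i = (k_i² - k_{m+1}²) q_i`, where
`A = u⁻¹ ∘ d/dt ∘ u` and `A^* = -u ∘ d/dt ∘ u⁻¹` for `u = q_{m+1}`. In both sums the derivatives of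
`cos (k_i (φ - ϕ))` in `φ` and in `ϕ` cancel, the top term of `S_{m+1}` is killed since `A^* u = 0`,
and the remaining terms agree because `c̃_i = c_i (k_i² - k_{m+1}²)`.
-/

section Wronskian

variable {n : ℕ}

/-- The Wronskian matrix of `f` at `t`, whose determinant is `wronsk f t`. -/
noncomputable def wronskMatrix (f : Fin n → ℝ → ℝ) (t : ℝ) : Matrix (Fin n) (Fin n) ℝ :=
  Matrix.of fun i j => iteratedDeriv (j : ℕ) (f i) t

/-- The ratio `Ψ_i` of the Wronskian of `f` with `f i` omitted to the full Wronskian; it is `0`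
where the latter vanishes. -/
noncomputable def wronskRatio (f : Fin (n + 1) → ℝ → ℝ) (i : Fin (n + 1)) (t : ℝ) : ℝ :=
  wronsk (fun j => f (i.succAbove j)) t / wronsk f t

/-- The dual family of `f`: the last row of the inverse Wronskian matrix. It is `0` where the
Wronskian vanishes. -/
noncomputable def wronskDual (f : Fin (n + 1) → ℝ → ℝ) (i : Fin (n + 1)) (t : ℝ) : ℝ :=
  (wronskMatrix f t)⁻¹ (Fin.last n) i

lemma wronskDual_eq_wronskRatio (f : Fin (n + 1) → ℝ → ℝ) (i : Fin (n + 1)) (t : ℝ) :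
    wronskDual f i t = (-1) ^ ((i : ℕ) + n) * wronskRatio f i t := by
  have hminor : ((wronskMatrix f t).submatrix i.succAbove (Fin.last n).succAbove).det
      = wronsk (fun j => f (i.succAbove j)) t := by
    simp only [Fin.succAbove_last]
    rfl
  have hdet : (wronskMatrix f t).det = wronsk f t := rfl
  rw [wronskDual, Matrix.inv_def, Matrix.smul_apply, Matrix.adjugate_fin_succ_eq_det_submatrix,
    hminor, hdet, Ring.inverse_eq_inv', smul_eq_mul, Fin.val_last, wronskRatio]
  ring

lemma wronskRatio_last (f : Fin (n + 1) → ℝ → ℝ) (t : ℝ) :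
    wronskRatio f (Fin.last n) t = wronsk (fun j : Fin n => f j.castSucc) t / wronsk f t := by
  simp only [wronskRatio, Fin.succAbove_last]

lemma wronskDual_last (f : Fin (n + 1) → ℝ → ℝ) :
    wronskDual f (Fin.last n) = wronskRatio f (Fin.last n) := by
  ext t
  simp [wronskDual_eq_wronskRatio, ← two_mul]

lemma wronskDual_last_ne_zero {f : Fin (n + 1) → ℝ → ℝ} {t : ℝ} (hW : wronsk f t ≠ 0)
    (hW' : wronsk (fun j : Fin n => f j.castSucc) t ≠ 0) : wronskDual f (Fin.last n) t ≠ 0 := by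
  rw [wronskDual_last, wronskRatio_last]
  exact div_ne_zero hW' hW

lemma sum_wronskDual_mul_iteratedDeriv {f : Fin (n + 1) → ℝ → ℝ} {t : ℝ} (hW : wronsk f t ≠ 0)
    {j : ℕ} (hj : j ≤ n) :
    ∑ i, wronskDual f i t * iteratedDeriv j (f i) t = if j = n then 1 else 0 := by
  have hunit : IsUnit (wronskMatrix f t).det := isUnit_iff_ne_zero.2 hW
  have hentry := congrFun (congrFun (Matrix.nonsing_inv_mul _ hunit) (Fin.last n))
    ⟨j, Nat.lt_succ_of_le hj⟩
  rw [Matrix.mul_apply, Matrix.one_apply] at hentry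
  exact hentry.trans (by simp only [Fin.ext_iff, Fin.val_last, eq_comm])

lemma eq_of_sum_mul_iteratedDeriv_eq {f : Fin n → ℝ → ℝ} {t : ℝ} (hW : wronsk f t ≠ 0)
    {r s : Fin n → ℝ}
    (h : ∀ j < n, ∑ i, r i * iteratedDeriv j (f i) t = ∑ i, s i * iteratedDeriv j (f i) t) :
    r = s := by
  have hunit : IsUnit (wronskMatrix f t) :=
    (Matrix.isUnit_iff_isUnit_det _).2 (isUnit_iff_ne_zero.2 hW)
  exact Matrix.vecMul_injective_of_isUnit hunit (funext fun j => h j j.2)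

lemma hasDerivAt_iteratedDeriv_of_contDiff {g : ℝ → ℝ} {j : ℕ} (hg : ContDiff ℝ n g) (hj : j < n)
    (t : ℝ) : HasDerivAt (iteratedDeriv j g) (iteratedDeriv (j + 1) g t) t := by
  rw [iteratedDeriv_succ]
  exact (hg.differentiable_iteratedDeriv j (mod_cast hj) t).hasDerivAt

lemma differentiable_wronsk {f : Fin n → ℝ → ℝ} (hf : ∀ i, ContDiff ℝ n (f i)) :
    Differentiable ℝ (wronsk f) := by
  have hentry (i j : Fin n) : Differentiable ℝ (iteratedDeriv (j : ℕ) (f i)) :=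
    fun t => (hasDerivAt_iteratedDeriv_of_contDiff (hf i) j.2 t).differentiableAt
  unfold wronsk
  simp only [Matrix.det_apply, Matrix.of_apply]
  fun_prop

lemma differentiableAt_wronskDual {f : Fin (n + 1) → ℝ → ℝ}
    (hf : ∀ i, ContDiff ℝ (n + 1 : ℕ) (f i)) {t : ℝ} (hW : wronsk f t ≠ 0) (i : Fin (n + 1)) :
    DifferentiableAt ℝ (wronskDual f i) t := by
  have hminor : Differentiable ℝ (wronsk fun j => f (i.succAbove j)) :=
    differentiable_wronsk fun j => (hf _).of_le (mod_cast n.le_succ)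
  rw [funext (wronskDual_eq_wronskRatio f i)]
  exact ((hminor t).div (differentiable_wronsk hf t) hW).const_mul _

lemma sum_deriv_wronskDual_mul_iteratedDeriv {f : Fin (n + 1) → ℝ → ℝ}
    (hf : ∀ i, ContDiff ℝ (n + 1 : ℕ) (f i)) {t : ℝ} (hW : wronsk f t ≠ 0) {j : ℕ} (hj : j ≤ n) :
    ∑ i, deriv (wronskDual f i) t * iteratedDeriv j (f i) t
      = -∑ i, wronskDual f i t * iteratedDeriv (j + 1) (f i) t := by
  have hderiv : HasDerivAt (fun s => ∑ i, wronskDual f i s * iteratedDeriv j (f i) s)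
      (∑ i, (deriv (wronskDual f i) t * iteratedDeriv j (f i) t
        + wronskDual f i t * iteratedDeriv (j + 1) (f i) t)) t :=
    HasDerivAt.fun_sum fun i _ => (differentiableAt_wronskDual hf hW i).hasDerivAt.mul
      (hasDerivAt_iteratedDeriv_of_contDiff (hf i) (Nat.lt_succ_of_le hj) t)
  have hconst : (fun s => ∑ i, wronskDual f i s * iteratedDeriv j (f i) s)
      =ᶠ[nhds t] fun _ => if j = n then 1 else 0 := by
    filter_upwards [(differentiable_wronsk hf).continuous.continuousAt.eventually_ne hW] with s hs
    exact sum_wronskDual_mul_iteratedDeriv hs hj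
  have hzero := (hderiv.congr_of_eventuallyEq hconst.symm).unique (hasDerivAt_const t _)
  rw [Finset.sum_add_distrib] at hzero
  exact eq_neg_of_add_eq_zero_left hzero

end Wronskian

section Darboux

variable {u v : ℝ → ℝ} {t : ℝ}

/-- The first-order operator `A = u⁻¹ ∘ d/dt ∘ u` of a Darboux transformation. -/
noncomputable def darboux (u v : ℝ → ℝ) (t : ℝ) : ℝ :=
  deriv (fun s => u s * v s) t / u t

/-- The formal adjoint `A^* = -u ∘ d/dt ∘ u⁻¹` of `darboux u`. -/
noncomputable def darbouxAdjoint (u v : ℝ → ℝ) (t : ℝ) : ℝ :=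
  -u t * deriv (fun s => v s / u s) t

lemma darboux_eq_deriv_add (hu : DifferentiableAt ℝ u t) (hv : DifferentiableAt ℝ v t)
    (hu0 : u t ≠ 0) : darboux u v t = deriv v t + logDeriv u t * v t := by
  rw [darboux, deriv_fun_mul hu hv, logDeriv_apply]
  field_simp
  ring

lemma darbouxAdjoint_eq_sub_deriv (hu : DifferentiableAt ℝ u t) (hv : DifferentiableAt ℝ v t)
    (hu0 : u t ≠ 0) : darbouxAdjoint u v t = logDeriv u t * v t - deriv v t := by
  rw [darbouxAdjoint, deriv_fun_div hv hu hu0, logDeriv_apply]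
  field_simp
  ring

lemma darbouxAdjoint_self (hu : DifferentiableAt ℝ u t) (hu0 : u t ≠ 0) :
    darbouxAdjoint u u t = 0 := by
  rw [darbouxAdjoint_eq_sub_deriv hu hu hu0, logDeriv_apply, div_mul_cancel₀ _ hu0, sub_self]

end Darboux

section Intertwining

variable {m : ℕ} {f : Fin (m + 2) → ℝ → ℝ} {t : ℝ}

lemma sum_darbouxAdjoint_wronskDual_mul_iteratedDeriv (hf : ∀ i, ContDiff ℝ (m + 2 : ℕ) (f i))
    (hW : wronsk f t ≠ 0) (hW' : wronsk (fun j : Fin (m + 1) => f j.castSucc) t ≠ 0)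
    {j : ℕ} (hj : j ≤ m + 1) :
    ∑ i : Fin (m + 1), darbouxAdjoint (wronskDual f (Fin.last _)) (wronskDual f i.castSucc) t
        * iteratedDeriv j (f i.castSucc) t
      = ∑ i, wronskDual f i t * iteratedDeriv (j + 1) (f i) t
        + if j = m + 1 then logDeriv (wronskDual f (Fin.last _)) t else 0 := by
  set u := wronskDual f (Fin.last (m + 1))
  have hu0 : u t ≠ 0 := wronskDual_last_ne_zero hW hW'
  have hq := differentiableAt_wronskDual hf hW
  calc
    _ = ∑ i, darbouxAdjoint u (wronskDual f i) t * iteratedDeriv j (f i) t := by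
      rw [Fin.sum_univ_castSucc (n := m + 1), darbouxAdjoint_self (hq _) hu0, zero_mul, add_zero]
    _ = logDeriv u t * ∑ i, wronskDual f i t * iteratedDeriv j (f i) t
          - ∑ i, deriv (wronskDual f i) t * iteratedDeriv j (f i) t := by
      rw [Finset.mul_sum, ← Finset.sum_sub_distrib]
      refine Finset.sum_congr rfl fun i _ => ?_
      rw [darbouxAdjoint_eq_sub_deriv (hq _) (hq i) hu0]
      ring
    _ = _ := by
      rw [sum_wronskDual_mul_iteratedDeriv hW hj, sum_deriv_wronskDual_mul_iteratedDeriv hf hW hj,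
        mul_ite, mul_one, mul_zero, sub_neg_eq_add, add_comm]

lemma darbouxAdjoint_wronskDual_castSucc (hf : ∀ i, ContDiff ℝ (m + 2 : ℕ) (f i))
    (hW : wronsk f t ≠ 0) (hW' : wronsk (fun j : Fin (m + 1) => f j.castSucc) t ≠ 0)
    (i : Fin (m + 1)) :
    darbouxAdjoint (wronskDual f (Fin.last _)) (wronskDual f i.castSucc) t
      = wronskDual (fun j : Fin (m + 1) => f j.castSucc) i t := by
  revert i
  refine congrFun (eq_of_sum_mul_iteratedDeriv_eq hW' fun j hj => ?_)
  rw [sum_darbouxAdjoint_wronskDual_mul_iteratedDeriv hf hW hW' hj.le,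
    sum_wronskDual_mul_iteratedDeriv hW hj, sum_wronskDual_mul_iteratedDeriv hW' (by lia),
    if_neg hj.ne, add_zero]
  simp only [Nat.succ_eq_add_one, Nat.add_right_cancel_iff]

lemma iteratedDeriv_add_two_of_deriv_deriv {g : ℝ → ℝ} {κ : ℝ}
    (hg : ∀ s, deriv (deriv g) s = -κ * g s) (j : ℕ) (t : ℝ) :
    iteratedDeriv (j + 2) g t = -κ * iteratedDeriv j g t := by
  rw [iteratedDeriv_succ', iteratedDeriv_succ', funext hg]
  exact iteratedDeriv_const_mul_field _ _

lemma sum_wronskDual_mul_iteratedDeriv_add_two {K : Fin (m + 2) → ℝ}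
    (hK : ∀ i s, deriv (deriv (f i)) s = -K i * f i s) (hW : wronsk f t ≠ 0)
    {j : ℕ} (hj : j ≤ m) :
    ∑ i, wronskDual f i t * iteratedDeriv (j + 2) (f i) t
      = -∑ i : Fin (m + 1), (K i.castSucc - K (Fin.last _)) * wronskDual f i.castSucc t
          * iteratedDeriv j (f i.castSucc) t := by
  have hzero := sum_wronskDual_mul_iteratedDeriv hW (show j ≤ m + 1 by lia)
  rw [if_neg (by lia)] at hzero
  calc
    _ = -∑ i, (K i - K (Fin.last _)) * wronskDual f i t * iteratedDeriv j (f i) t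
          - K (Fin.last _) * ∑ i, wronskDual f i t * iteratedDeriv j (f i) t := by
      rw [Finset.mul_sum, ← Finset.sum_neg_distrib, ← Finset.sum_sub_distrib]
      refine Finset.sum_congr rfl fun i _ => ?_
      rw [iteratedDeriv_add_two_of_deriv_deriv (hK i)]
      ring
    _ = _ := by
      rw [hzero, mul_zero, sub_zero, Fin.sum_univ_castSucc, sub_self, zero_mul, zero_mul, add_zero]

lemma darboux_wronskDual_castSucc (hf : ∀ i, ContDiff ℝ (m + 2 : ℕ) (f i)) {K : Fin (m + 2) → ℝ}
    (hK : ∀ i s, deriv (deriv (f i)) s = -K i * f i s)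
    (hW : wronsk f t ≠ 0) (hW' : wronsk (fun j : Fin (m + 1) => f j.castSucc) t ≠ 0)
    (i : Fin (m + 1)) :
    darboux (wronskDual f (Fin.last _)) (wronskDual (fun j : Fin (m + 1) => f j.castSucc) i) t
      = (K i.castSucc - K (Fin.last _)) * wronskDual f i.castSucc t := by
  revert i
  refine congrFun (eq_of_sum_mul_iteratedDeriv_eq hW' fun j hj => ?_)
  set u := wronskDual f (Fin.last (m + 1))
  set p := wronskDual fun j : Fin (m + 1) => f j.castSucc
  have hf' (i : Fin (m + 1)) : ContDiff ℝ (m + 1 : ℕ) (f i.castSucc) :=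
    (hf _).of_le (mod_cast (m + 1).le_succ)
  have hu0 : u t ≠ 0 := wronskDual_last_ne_zero hW hW'
  have hu : DifferentiableAt ℝ u t := differentiableAt_wronskDual hf hW _
  have hshift : ∑ i, p i t * iteratedDeriv (j + 1) (f i.castSucc) t
      = ∑ i, wronskDual f i t * iteratedDeriv (j + 2) (f i) t
        + if j = m then logDeriv u t else 0 := by
    simpa only [darbouxAdjoint_wronskDual_castSucc hf hW hW', Nat.add_right_cancel_iff] using
      sum_darbouxAdjoint_wronskDual_mul_iteratedDeriv hf hW hW' (j := j + 1) hj
  calc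
    _ = ∑ i, deriv (p i) t * iteratedDeriv j (f i.castSucc) t
          + logDeriv u t * ∑ i, p i t * iteratedDeriv j (f i.castSucc) t := by
      rw [Finset.mul_sum, ← Finset.sum_add_distrib]
      refine Finset.sum_congr rfl fun i _ => ?_
      rw [darboux_eq_deriv_add hu (differentiableAt_wronskDual hf' hW' i) hu0]
      ring
    _ = -∑ i, wronskDual f i t * iteratedDeriv (j + 2) (f i) t := by
      rw [sum_deriv_wronskDual_mul_iteratedDeriv hf' hW' (Nat.le_of_lt_succ hj),
        sum_wronskDual_mul_iteratedDeriv hW' (Nat.le_of_lt_succ hj), hshift, mul_ite, mul_one,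
        mul_zero, neg_add, neg_add_cancel_right]
    _ = _ := by
      rw [sum_wronskDual_mul_iteratedDeriv_add_two hK hW (Nat.le_of_lt_succ hj), neg_neg]

end Intertwining

section BilinearSum

variable {n : ℕ} {c : Fin n → ℝ} {ψ g : Fin n → ℝ → ℝ} {u : ℝ → ℝ} {φ ϕ : ℝ}

/-- The sum `∑ c_i ψ_i(φ) ψ_i(ϕ) g_i(φ - ϕ)`; the sums `S_m` and `S_{m+1}` are the case
`g_i = cos (k_i ·)`. -/
noncomputable def bilinearSum (c : Fin n → ℝ) (ψ g : Fin n → ℝ → ℝ) (φ ϕ : ℝ) : ℝ :=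
  ∑ i, c i * ψ i φ * ψ i ϕ * g i (φ - ϕ)

lemma bilinearSum_wronskRatio (c : Fin (n + 1) → ℝ) (f g : Fin (n + 1) → ℝ → ℝ) :
    bilinearSum c (wronskRatio f) g = bilinearSum c (wronskDual f) g := by
  ext φ ϕ
  refine Finset.sum_congr rfl fun i _ => ?_
  have hsign : (-1 : ℝ) ^ ((i : ℕ) + n) * (-1) ^ ((i : ℕ) + n) = 1 := by
    rw [← mul_pow, neg_mul_neg, one_mul, one_pow]
  rw [wronskDual_eq_wronskRatio, wronskDual_eq_wronskRatio]
  linear_combination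
    -(c i * wronskRatio f i φ * wronskRatio f i ϕ * g i (φ - ϕ)) * hsign

lemma hasDerivAt_bilinearSum_left (hψ : ∀ i, DifferentiableAt ℝ (ψ i) φ)
    (hg : ∀ i, DifferentiableAt ℝ (g i) (φ - ϕ)) :
    HasDerivAt (fun t => bilinearSum c ψ g t ϕ)
      (∑ i, c i * (deriv (ψ i) φ * ψ i ϕ * g i (φ - ϕ)
        + ψ i φ * ψ i ϕ * deriv (g i) (φ - ϕ))) φ := by
  refine HasDerivAt.fun_sum fun i _ => ?_
  have hgi := (hg i).hasDerivAt.comp_sub_const φ ϕ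
  refine ((((hψ i).hasDerivAt.const_mul (c i)).mul_const (ψ i ϕ)).mul hgi).congr_deriv ?_
  ring

lemma hasDerivAt_bilinearSum_right (hψ : ∀ i, DifferentiableAt ℝ (ψ i) ϕ)
    (hg : ∀ i, DifferentiableAt ℝ (g i) (φ - ϕ)) :
    HasDerivAt (fun t => bilinearSum c ψ g φ t)
      (∑ i, c i * (ψ i φ * deriv (ψ i) ϕ * g i (φ - ϕ)
        - ψ i φ * ψ i ϕ * deriv (g i) (φ - ϕ))) ϕ := by
  refine HasDerivAt.fun_sum fun i _ => ?_
  have hgi := (hg i).hasDerivAt.comp_const_sub φ ϕ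
  refine (((hψ i).hasDerivAt.const_mul (c i * ψ i φ)).mul hgi).congr_deriv ?_
  ring

lemma darboux_bilinearSum_add (huφ : DifferentiableAt ℝ u φ) (huϕ : DifferentiableAt ℝ u ϕ)
    (huφ0 : u φ ≠ 0) (huϕ0 : u ϕ ≠ 0)
    (hψφ : ∀ i, DifferentiableAt ℝ (ψ i) φ) (hψϕ : ∀ i, DifferentiableAt ℝ (ψ i) ϕ)
    (hg : ∀ i, DifferentiableAt ℝ (g i) (φ - ϕ)) :
    darboux u (fun t => bilinearSum c ψ g t ϕ) φ + darboux u (fun t => bilinearSum c ψ g φ t) ϕ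
      = ∑ i, c i * (darboux u (ψ i) φ * ψ i ϕ + ψ i φ * darboux u (ψ i) ϕ) * g i (φ - ϕ) := by
  have hleft := hasDerivAt_bilinearSum_left (c := c) hψφ hg
  have hright := hasDerivAt_bilinearSum_right (c := c) hψϕ hg
  rw [darboux_eq_deriv_add huφ hleft.differentiableAt huφ0,
    darboux_eq_deriv_add huϕ hright.differentiableAt huϕ0, hleft.deriv, hright.deriv]
  simp only [bilinearSum, Finset.mul_sum, ← Finset.sum_add_distrib]
  refine Finset.sum_congr rfl fun i _ => ?_
  rw [darboux_eq_deriv_add huφ (hψφ i) huφ0, darboux_eq_deriv_add huϕ (hψϕ i) huϕ0]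
  ring

lemma darbouxAdjoint_bilinearSum_add (huφ : DifferentiableAt ℝ u φ) (huϕ : DifferentiableAt ℝ u ϕ)
    (huφ0 : u φ ≠ 0) (huϕ0 : u ϕ ≠ 0)
    (hψφ : ∀ i, DifferentiableAt ℝ (ψ i) φ) (hψϕ : ∀ i, DifferentiableAt ℝ (ψ i) ϕ)
    (hg : ∀ i, DifferentiableAt ℝ (g i) (φ - ϕ)) :
    darbouxAdjoint u (fun t => bilinearSum c ψ g t ϕ) φ
        + darbouxAdjoint u (fun t => bilinearSum c ψ g φ t) ϕ
      = ∑ i, c i * (darbouxAdjoint u (ψ i) φ * ψ i ϕ + ψ i φ * darbouxAdjoint u (ψ i) ϕ)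
          * g i (φ - ϕ) := by
  have hleft := hasDerivAt_bilinearSum_left (c := c) hψφ hg
  have hright := hasDerivAt_bilinearSum_right (c := c) hψϕ hg
  rw [darbouxAdjoint_eq_sub_deriv huφ hleft.differentiableAt huφ0,
    darbouxAdjoint_eq_sub_deriv huϕ hright.differentiableAt huϕ0, hleft.deriv, hright.deriv]
  simp only [bilinearSum, Finset.mul_sum, ← Finset.sum_add_distrib, ← Finset.sum_sub_distrib]
  refine Finset.sum_congr rfl fun i _ => ?_
  rw [darbouxAdjoint_eq_sub_deriv huφ (hψφ i) huφ0, darbouxAdjoint_eq_sub_deriv huϕ (hψϕ i) huϕ0]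
  ring

end BilinearSum

theorem bilinear_sum_recurrence_general {m : ℕ} {f : Fin (m + 2) → ℝ → ℝ}
    (hf : ∀ i, ContDiff ℝ (m + 2 : ℕ) (f i)) {K : Fin (m + 2) → ℝ}
    (hK : ∀ i s, deriv (deriv (f i)) s = -K i * f i s)
    {c : Fin (m + 1) → ℝ} {c' : Fin (m + 2) → ℝ}
    (hc : ∀ i, c' i.castSucc = c i * (K i.castSucc - K (Fin.last _)))
    {g : Fin (m + 2) → ℝ → ℝ} {φ ϕ : ℝ} (hg : ∀ i, DifferentiableAt ℝ (g i) (φ - ϕ))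
    (hWφ : wronsk (fun j : Fin (m + 1) => f j.castSucc) φ ≠ 0)
    (hWϕ : wronsk (fun j : Fin (m + 1) => f j.castSucc) ϕ ≠ 0)
    (hWtφ : wronsk f φ ≠ 0) (hWtϕ : wronsk f ϕ ≠ 0) :
    let u := wronskRatio f (Fin.last (m + 1))
    let S := bilinearSum c (wronskRatio fun j : Fin (m + 1) => f j.castSucc) fun j => g j.castSucc
    let S' := bilinearSum c' (wronskRatio f) g
    darbouxAdjoint u (fun t => S' t ϕ) φ + darbouxAdjoint u (fun t => S' φ t) ϕ
      = darboux u (fun t => S t ϕ) φ + darboux u (fun t => S φ t) ϕ := by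
  intro u S S'
  have hf' (i : Fin (m + 1)) : ContDiff ℝ (m + 1 : ℕ) (f i.castSucc) :=
    (hf _).of_le (mod_cast (m + 1).le_succ)
  have hqφ := differentiableAt_wronskDual hf hWtφ
  have hqϕ := differentiableAt_wronskDual hf hWtϕ
  have huφ0 := wronskDual_last_ne_zero hWtφ hWφ
  have huϕ0 := wronskDual_last_ne_zero hWtϕ hWϕ
  simp only [u, S, S', bilinearSum_wronskRatio, ← wronskDual_last]
  rw [darbouxAdjoint_bilinearSum_add (hqφ _) (hqϕ _) huφ0 huϕ0 hqφ hqϕ hg,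
    darboux_bilinearSum_add (hqφ _) (hqϕ _) huφ0 huϕ0 (differentiableAt_wronskDual hf' hWφ)
      (differentiableAt_wronskDual hf' hWϕ) fun i => hg i.castSucc,
    Fin.sum_univ_castSucc, darbouxAdjoint_self (hqφ _) huφ0, darbouxAdjoint_self (hqϕ _) huϕ0,
    zero_mul, mul_zero, add_zero, mul_zero, zero_mul, add_zero]
  refine Finset.sum_congr rfl fun i _ => ?_
  rw [darbouxAdjoint_wronskDual_castSucc hf hWtφ hWφ,
    darbouxAdjoint_wronskDual_castSucc hf hWtϕ hWϕ, darboux_wronskDual_castSucc hf hK hWtφ hWφ,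
    darboux_wronskDual_castSucc hf hK hWtϕ hWϕ, hc]
  ring

section Cosines

variable (m : ℕ) (k : Fin (m + 2) → ℤ) (θ : Fin (m + 2) → ℝ)

lemma contDiff_chiF (n : ℕ) (i : Fin (m + 2)) : ContDiff ℝ n (chiF m k θ i) := by
  unfold chiF
  fun_prop

lemma deriv_deriv_chiF (i : Fin (m + 2)) (s : ℝ) :
    deriv (deriv (chiF m k θ i)) s = -(k i : ℝ) ^ 2 * chiF m k θ i s := by
  have hphase (s : ℝ) : HasDerivAt (fun φ : ℝ => (k i : ℝ) * φ + θ i) (k i) s := by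
    simpa using ((hasDerivAt_id s).const_mul (k i : ℝ)).add_const (θ i)
  have hfirst : deriv (chiF m k θ i) = fun φ => -Real.sin (k i * φ + θ i) * k i :=
    funext fun s => (hphase s).cos.deriv
  rw [hfirst, ((hphase s).sin.fun_neg.mul_const _).deriv, chiF]
  ring

lemma ctF_castSucc (i : Fin (m + 1)) :
    ctF m k i.castSucc = cF m k i * ((k i.castSucc : ℝ) ^ 2 - (k (Fin.last _) : ℝ) ^ 2) := by
  simp only [ctF, cF, ← Finset.filter_ne', Finset.prod_filter, Fin.prod_univ_castSucc, ne_eq,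
    Fin.castSucc_inj, (Fin.castSucc_lt_last i).ne', not_false_eq_true, if_true]

lemma PsitF_eq_wronskRatio : PsitF m k θ = wronskRatio (chiF m k θ) := rfl

lemma Sm_eq_bilinearSum :
    Sm m k θ = bilinearSum (cF m k) (wronskRatio fun j : Fin (m + 1) => chiF m k θ j.castSucc)
      fun i x => Real.cos (k i.castSucc * x) := rfl

lemma Smt_eq_bilinearSum :
    Smt m k θ = bilinearSum (ctF m k) (wronskRatio (chiF m k θ))
      fun i x => Real.cos (k i * x) := rfl

end Cosines

/-- **Equation (diff): recurrence between bilinear sums.**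
`A_m^*[S_{m+1}(·,ϕ)] + A_m^*[S_{m+1}(φ,·)] = A_m[S_m(·,ϕ)] + A_m[S_m(φ,·)]`, where
`A_m = Ψ̃_{m+1}^{−1} ∘ (d/dφ) ∘ Ψ̃_{m+1}` and `A_m^* = −Ψ̃_{m+1} ∘ (d/dφ) ∘ Ψ̃_{m+1}^{−1}`. -/
theorem bilinear_sum_recurrence (m : ℕ) (hm : 1 ≤ m)
    (k : Fin (m + 2) → ℤ) (hk0 : k 0 = 0) (hk : StrictMono k)
    (θ : Fin (m + 2) → ℝ) (hθ0 : θ 0 = 0)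
    (φ ϕ : ℝ) (hWφ : Wfn m k θ φ ≠ 0) (hWϕ : Wfn m k θ ϕ ≠ 0)
    (hWtφ : Wtfn m k θ φ ≠ 0) (hWtϕ : Wtfn m k θ ϕ ≠ 0) :
    -PsitF m k θ (Fin.last (m + 1)) φ *
        deriv (fun t => Smt m k θ t ϕ / PsitF m k θ (Fin.last (m + 1)) t) φ -
      PsitF m k θ (Fin.last (m + 1)) ϕ *
        deriv (fun t => Smt m k θ φ t / PsitF m k θ (Fin.last (m + 1)) t) ϕ
    = deriv (fun t => PsitF m k θ (Fin.last (m + 1)) t * Sm m k θ t ϕ) φ /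
          PsitF m k θ (Fin.last (m + 1)) φ +
        deriv (fun t => PsitF m k θ (Fin.last (m + 1)) t * Sm m k θ φ t) ϕ /
          PsitF m k θ (Fin.last (m + 1)) ϕ := by
  rw [sub_eq_add_neg, ← neg_mul, PsitF_eq_wronskRatio, Sm_eq_bilinearSum, Smt_eq_bilinearSum]
  exact bilinear_sum_recurrence_general (contDiff_chiF m k θ _) (deriv_deriv_chiF m k θ)
    (ctF_castSucc m k) (fun _ => by fun_prop) hWφ hWϕ hWtφ hWtϕ
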